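/- arXiv:1011.2157 — 2 statements merged into one kernel-verified Lean document; each statement's English description precedes it below -/
import Mathlib

section
/- Let u_1 ≥_lex ⋯ ≥_lex u_N ≥_lex u_{N+1} be monomials of degree d in S = K[x_1,…,x_n] such that the exponent of x_1 in u_i is at most 1 for all 1 ≤ i ≤ N, u_1 ⋯ u_N is a standard product, and max(supp(u_1 ⋯ u_N)) ≤ min(supp(u_{N+1})). If v_1 ⋯ v_{N+1} is a standard product of monomials of degree d with v_1 ⋯ v_{N+1} = u_1 ⋯ u_N u_{N+1}, then v_{N+1} ≤_lex u_N. -/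
/-!
Counting entries below a threshold `c` compares the sorted list of all entries of `u_1, …, u_N` with the sorted list of all entries of
`v_1, …, v_{N+1}`: since every entry of `u_{N+1}` is at least every entry of `u_1, …, u_N`, the
second list dominates the first one position by position, as far as the first one reaches.

This domination (`Dominated`), together with having at least as many factors, already forces the
last factor of `v` to be lexicographically at most the last factor of `u` (`monGE_of_dominated`).
The proof is by induction on `d`. In a standard product the first entries of the factors are the
smallest of all entries, so domination compares the first entries of the two last factors. If these
agree, with common value `a`, restrict to the factors with first entry `a` and delete that entry.
The factors outside this group have larger tails than those inside, so domination passes to the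
tails of the two groups; domination at the threshold `a` shows that the group in `v` is at least as
large as the group in `u`.
-/

/-- The multiset of variable indices of the monomial `x_{a 0} ⋯ x_{a (d-1)}`. A product of
monomials corresponds to the (multiset) sum of the index multisets. -/
def tupMul {n d : ℕ} (a : Fin d → Fin n) : Multiset (Fin n) := Finset.univ.val.map a

/-- `x_a >_lex x_b` for monomials given by (sorted) index tuples `a`, `b`, with
`x_1 > x_2 > ⋯ > x_n` (index `0` corresponds to `x_1`). -/
def monGT {n d : ℕ} (a b : Fin d → Fin n) : Prop :=
  ∃ s : Fin d, (∀ t, t < s → a t = b t) ∧ a s < b s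

/-- `x_a ≥_lex x_b`. -/
def monGE {n d : ℕ} (a b : Fin d → Fin n) : Prop := a = b ∨ monGT a b

/-- The standard pair condition on sorted index tuples: either they agree, or there is `s`
with `a t = b t` for `t < s`, `a s < b s` and, past `s`, every entry of `b` is ≤ every entry
of `a`. -/
def StdPair {n d : ℕ} (a b : Fin d → Fin n) : Prop :=
  a = b ∨ ∃ s : Fin d, (∀ t, t < s → a t = b t) ∧ a s < b s ∧
    ∀ t t' : Fin d, s < t → s < t' → b t ≤ a t'

/-- `w_1 ⋯ w_N` is a standard product: each factor is a monomial (sorted tuple) and every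
pair of factors (in order) satisfies the standard pair condition. -/
def StdProd {n d N : ℕ} (w : Fin N → Fin d → Fin n) : Prop :=
  (∀ i, Monotone (w i)) ∧ ∀ i j : Fin N, i < j → StdPair (w i) (w j)

/-- The number of entries smaller than `c` in the tuples `u i`, `i ∈ I`. -/
def cntLT {ι : Type*} {n d : ℕ} (I : Finset ι) (u : ι → Fin d → Fin n) (c : Fin n) : ℕ :=
  ∑ i ∈ I, (Finset.univ.filter fun t => u i t < c).card

/-- The sorted list of entries of `v` on `J` is, position by position and as far as the sorted list
of entries of `u` on `I` reaches, at least the latter; expressed by counting entries below each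
threshold. -/
def Dominated {ι κ : Type*} {n d : ℕ} (I : Finset ι) (u : ι → Fin d → Fin n)
    (J : Finset κ) (v : κ → Fin d → Fin n) : Prop :=
  ∀ c, cntLT J v c ≤ cntLT I u c ∨ ∀ i ∈ I, ∀ t, u i t < c

/-- A family of sorted tuples, any two of which form a standard pair in some order, with `p` a
last factor. -/
structure StdFamily {ι : Type*} {n d : ℕ} (I : Finset ι) (u : ι → Fin d → Fin n) (p : ι) :
    Prop where
  mono : ∀ i ∈ I, Monotone (u i)
  mem : p ∈ I
  last : ∀ i ∈ I, StdPair (u i) (u p)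
  pair : ∀ i ∈ I, ∀ j ∈ I, StdPair (u i) (u j) ∨ StdPair (u j) (u i)

theorem cntLT_succ {ι : Type*} {n d : ℕ} (I : Finset ι) (u : ι → Fin (d + 1) → Fin n)
    (c : Fin n) :
    cntLT I u c = (I.filter fun i => u i 0 < c).card + cntLT I (fun i => Fin.tail (u i)) c := by
  unfold cntLT
  rw [Finset.card_filter, ← Finset.sum_add_distrib]
  refine Finset.sum_congr rfl fun i _ => ?_
  rw [Finset.card_filter, Fin.sum_univ_succ, Finset.card_filter]
  rfl

theorem cntLT_eq_zero {ι : Type*} {n d : ℕ} {I : Finset ι} {u : ι → Fin d → Fin n}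
    {c : Fin n} (h : ∀ i ∈ I, ∀ t, c ≤ u i t) : cntLT I u c = 0 := by
  unfold cntLT
  refine Finset.sum_eq_zero fun i hi => ?_
  rw [Finset.card_eq_zero, Finset.filter_eq_empty_iff]
  exact fun t _ => not_lt.mpr (h i hi t)

theorem StdPair.head_le {n d : ℕ} {a b : Fin (d + 1) → Fin n} (h : StdPair a b) : a 0 ≤ b 0 := by
  rcases h with rfl | ⟨s, h1, h2, -⟩
  · exact le_rfl
  · rcases eq_or_ne s 0 with rfl | hs
    · exact h2.le
    · exact (h1 0 (Fin.pos_of_ne_zero hs)).le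

theorem StdPair.tail_le {n d : ℕ} {a b : Fin (d + 1) → Fin n} (h : StdPair a b)
    (hab : a 0 < b 0) (t t' : Fin d) : Fin.tail b t ≤ Fin.tail a t' := by
  rcases h with rfl | ⟨s, h1, h2, h3⟩
  · exact absurd hab (lt_irrefl _)
  · rcases eq_or_ne s 0 with rfl | hs
    · exact h3 _ _ (Fin.succ_pos t) (Fin.succ_pos t')
    · exact absurd (h1 0 (Fin.pos_of_ne_zero hs)) hab.ne

theorem StdPair.tail {n d : ℕ} {a b : Fin (d + 1) → Fin n} (h : StdPair a b)
    (hab : a 0 = b 0) : StdPair (Fin.tail a) (Fin.tail b) := by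
  rcases h with rfl | ⟨s, h1, h2, h3⟩
  · exact Or.inl rfl
  · rcases Fin.eq_zero_or_eq_succ s with rfl | ⟨s, rfl⟩
    · exact absurd hab h2.ne
    · exact Or.inr ⟨s, fun t ht => h1 _ (Fin.succ_lt_succ_iff.mpr ht), h2, fun t t' ht ht' =>
        h3 _ _ (Fin.succ_lt_succ_iff.mpr ht) (Fin.succ_lt_succ_iff.mpr ht')⟩

theorem monGE_of_tail {n d : ℕ} {a b : Fin (d + 1) → Fin n} (h0 : a 0 = b 0)
    (h : monGE (Fin.tail a) (Fin.tail b)) : monGE a b := by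
  rcases h with h | ⟨s, h1, h2⟩
  · left
    rw [← Fin.cons_self_tail a, ← Fin.cons_self_tail b, h, h0]
  · refine Or.inr ⟨s.succ, fun t ht => ?_, h2⟩
    rcases Fin.eq_zero_or_eq_succ t with rfl | ⟨t, rfl⟩
    · exact h0
    · exact h1 t (Fin.succ_lt_succ_iff.mp ht)

namespace StdFamily

variable {ι : Type*} {n d : ℕ} {I : Finset ι} {u : ι → Fin (d + 1) → Fin n} {p : ι}

/-- The first entry of the last factor is at most every entry outside the first column. -/
theorem head_le_tail (h : StdFamily I u p) {i : ι} (hi : i ∈ I) (t : Fin d) :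
    u p 0 ≤ Fin.tail (u i) t := by
  rcases (h.last i hi).head_le.lt_or_eq with hlt | heq
  · exact (h.mono p h.mem (Fin.zero_le t.succ)).trans ((h.last i hi).tail_le hlt t t)
  · exact heq ▸ h.mono i hi (Fin.zero_le t.succ)

theorem tails (h : StdFamily I u p) :
    StdFamily (I.filter fun i => u i 0 = u p 0) (fun i => Fin.tail (u i)) p where
  mono i hi _ _ hst := h.mono i (Finset.mem_filter.mp hi).1 (Fin.succ_le_succ_iff.mpr hst)
  mem := Finset.mem_filter.mpr ⟨h.mem, rfl⟩
  last i hi := (h.last i (Finset.mem_filter.mp hi).1).tail (Finset.mem_filter.mp hi).2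
  pair i hi j hj := by
    obtain ⟨hi, hi0⟩ := Finset.mem_filter.mp hi
    obtain ⟨hj, hj0⟩ := Finset.mem_filter.mp hj
    exact (h.pair i hi j hj).imp (·.tail (hi0.trans hj0.symm)) (·.tail (hj0.trans hi0.symm))

theorem cntLT_head (h : StdFamily I u p) :
    cntLT I u (u p 0) = (I.filter fun i => u i 0 < u p 0).card := by
  rw [cntLT_succ, cntLT_eq_zero fun i hi t => h.head_le_tail hi t, add_zero]

theorem cntLT_of_head_lt (h : StdFamily I u p) {c : Fin n} (hc : u p 0 < c) :
    cntLT I u c = I.card + cntLT I (fun i => Fin.tail (u i)) c := by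
  rw [cntLT_succ, Finset.filter_true_of_mem fun i hi => (h.last i hi).head_le.trans_lt hc]

theorem cntLT_head_add_card (h : StdFamily I u p) :
    cntLT I u (u p 0) + (I.filter fun i => u i 0 = u p 0).card = I.card := by
  rw [h.cntLT_head, add_comm, ← Finset.card_filter_add_card_filter_not (s := I)
    (fun i => u i 0 = u p 0)]
  congr 2
  refine Finset.filter_congr fun i hi => ?_
  exact ⟨fun h => h.ne, fun hne => lt_of_le_of_ne (h.last i hi).head_le hne⟩

/-- Factors with a smaller first entry have larger tails, so below a threshold exceeded in the tails
of the last group only that group contributes. -/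
theorem cntLT_tails (h : StdFamily I u p) {c : Fin n} {i : ι} (hi : i ∈ I)
    (hi0 : u i 0 = u p 0) {t : Fin d} (ht : c ≤ Fin.tail (u i) t) :
    cntLT I (fun i => Fin.tail (u i)) c
      = cntLT (I.filter fun i => u i 0 = u p 0) (fun i => Fin.tail (u i)) c := by
  unfold cntLT
  symm
  refine Finset.sum_subset (Finset.filter_subset _ _) fun j hj hjn => ?_
  have hlt : u j 0 < u i 0 := by
    rw [hi0]
    exact lt_of_le_of_ne (h.last j hj).head_le fun e => hjn (Finset.mem_filter.mpr ⟨hj, e⟩)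
  rw [Finset.card_eq_zero, Finset.filter_eq_empty_iff]
  intro t' _
  rcases h.pair j hj i hi with hp | hp
  · exact not_lt.mpr (ht.trans (hp.tail_le hlt t t'))
  · exact absurd hp.head_le (not_le.mpr hlt)

end StdFamily

/-- The inductive form of the theorem: domination replaces the relation between the two products,
and is inherited by the tails of the last groups. -/
theorem monGE_of_dominated {ι κ : Type*} {n : ℕ} : ∀ {d : ℕ} {I : Finset ι} {J : Finset κ}
    {u : ι → Fin d → Fin n} {v : κ → Fin d → Fin n} {p : ι} {q : κ},
    StdFamily I u p → StdFamily J v q → I.card ≤ J.card → Dominated I u J v →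
    monGE (u p) (v q)
  | 0, _, _, _, _, _, _, _, _, _, _ => Or.inl (Subsingleton.elim _ _)
  | d + 1, I, J, u, v, p, q, hu, hv, hcard, hdom => by
    have hpa : cntLT J v (u p 0) ≤ cntLT I u (u p 0) :=
      (hdom (u p 0)).resolve_right fun h => lt_irrefl _ (h p hu.mem 0)
    have hI := hu.cntLT_head_add_card
    have hpos : 0 < (I.filter fun i => u i 0 = u p 0).card :=
      Finset.card_pos.mpr ⟨p, Finset.mem_filter.mpr ⟨hu.mem, rfl⟩⟩
    rcases lt_trichotomy (u p 0) (v q 0) with hlt | heq | hgt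
    · exact Or.inr ⟨0, fun t ht => absurd ht (Fin.not_lt_zero t), hlt⟩
    · refine monGE_of_tail heq (monGE_of_dominated hu.tails hv.tails ?_ ?_)
      · have hJ := hv.cntLT_head_add_card
        rw [← heq] at hJ ⊢
        omega
      · intro c
        rcases le_or_gt c (u p 0) with hc | hc
        · left
          rw [cntLT_eq_zero fun j hj t => ?_]
          · exact Nat.zero_le _
          · exact hc.trans (heq.le.trans (hv.head_le_tail (Finset.mem_filter.mp hj).1 t))
        · rw [or_iff_not_imp_right]
          intro hne
          push Not at hne
          obtain ⟨i, hi, t, ht⟩ := hne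
          obtain ⟨hi, hi0⟩ := Finset.mem_filter.mp hi
          have h1 := (hdom c).resolve_right fun h => not_le.mpr (h i hi t.succ) ht
          rw [hu.cntLT_of_head_lt hc, hv.cntLT_of_head_lt (heq ▸ hc),
            hu.cntLT_tails hi hi0 ht] at h1
          have h2 : cntLT (J.filter fun j => v j 0 = v q 0) (fun j => Fin.tail (v j)) c
              ≤ cntLT J (fun j => Fin.tail (v j)) c :=
            Finset.sum_le_sum_of_subset (Finset.filter_subset _ _)
          omega
    · have hall := hv.cntLT_of_head_lt hgt
      omega

theorem StdProd.stdFamily {n d N : ℕ} {w : Fin N → Fin d → Fin n} (h : StdProd w) {p : Fin N}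
    (hp : ∀ i, i ≤ p) : StdFamily Finset.univ w p where
  mono i _ := h.1 i
  mem := Finset.mem_univ p
  last i _ := by
    rcases (hp i).eq_or_lt with rfl | hlt
    · exact Or.inl rfl
    · exact h.2 i p hlt
  pair i _ j _ := by
    rcases lt_trichotomy i j with hlt | rfl | hgt
    · exact Or.inl (h.2 i j hlt)
    · exact Or.inl (Or.inl rfl)
    · exact Or.inr (h.2 j i hgt)

theorem cntLT_univ_eq_countP {n d N : ℕ} (w : Fin N → Fin d → Fin n) (c : Fin n) :
    cntLT Finset.univ w c = Multiset.countP (· < c) (∑ i, tupMul (w i)) := by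
  have h := map_sum (Multiset.countPAddMonoidHom (· < c)) (fun i => tupMul (w i)) Finset.univ
  simp only [Multiset.coe_countPAddMonoidHom] at h
  rw [h]
  unfold cntLT
  refine Finset.sum_congr rfl fun i _ => ?_
  rw [tupMul, Multiset.countP_map]
  rfl

/-- let `u_1 ≥_lex ⋯ ≥_lex u_{N+1}` be monomials of degree `d` such that the
exponent of `x_1` in each of `u_1,…,u_N` is at most `1`, `u_1 ⋯ u_N` is a standard product
and `max(supp(u_1 ⋯ u_N)) ≤ min(supp(u_{N+1}))`.  If `v_1 ⋯ v_{N+1}` is a standard product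
with `v_1 ⋯ v_{N+1} = u_1 ⋯ u_N u_{N+1}`, then `v_{N+1} ≤_lex u_N`. -/
theorem stmt2 {n d N : ℕ} (hn : 0 < n) (hd : 0 < d) (hN : 0 < N)
    (u v : Fin (N + 1) → Fin d → Fin n)
    (humono : ∀ i, Monotone (u i))
    (hdec : ∀ i j : Fin (N + 1), i ≤ j → monGE (u i) (u j))
    (hx1 : ∀ i : Fin (N + 1), (i : ℕ) < N → Multiset.count (⟨0, hn⟩ : Fin n) (tupMul (u i)) ≤ 1)
    (hstd : StdProd (fun i : Fin N => u i.castSucc))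
    (hsupp : ∀ (i : Fin N) (t t' : Fin d), u i.castSucc t ≤ u (Fin.last N) t')
    (hv : StdProd v)
    (heq : ∑ i, tupMul (v i) = ∑ i, tupMul (u i)) :
    monGE (u ⟨N - 1, by omega⟩) (v (Fin.last N)) := by
  have hfu : StdFamily Finset.univ (fun i : Fin N => u i.castSucc) ⟨N - 1, by omega⟩ :=
    hstd.stdFamily fun i => Fin.mk_le_mk.mpr (by omega)
  have hfv : StdFamily Finset.univ v (Fin.last N) := hv.stdFamily Fin.le_last
  suffices hdom : Dominated Finset.univ (fun i : Fin N => u i.castSucc) Finset.univ v from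
    monGE_of_dominated (u := fun i : Fin N => u i.castSucc) hfu hfv (by simp) hdom
  intro c
  rw [or_iff_not_imp_right]
  intro hne
  push Not at hne
  obtain ⟨i, -, t, ht⟩ := hne
  -- Some entry of `u_1 ⋯ u_N` is at least `c`, hence so are all entries of `u_{N+1}`.
  have hz : (Finset.univ.filter fun t' => u (Fin.last N) t' < c).card = 0 := by
    rw [Finset.card_eq_zero, Finset.filter_eq_empty_iff]
    exact fun t' _ => not_lt.mpr (ht.trans (hsupp i t t'))
  rw [cntLT_univ_eq_countP, heq, ← cntLT_univ_eq_countP, cntLT, Fin.sum_univ_castSucc, hz]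
  exact le_rfl
end

section
/- Let u = x_1^{a_1}⋯x_n^{a_n} with a_1 > 0 and v = x_1^{b_1}⋯x_n^{b_n} be monomials of degree d ≥ 2 with u ≥_lex v, and let I = (L(u,v)) be a completely lexsegment ideal that has linear quotients. Then for every N ≥ 1 the power I^N has linear quotients. -/
/-!
Order the generators of the power lexicographically in `x_2, …, x_n`, ignoring `x_1` (`Prec`); since
all generators have the same degree, this is a linear order. Suppose that `uj` precedes `ui` and that
`x_q` is the first variable after `x_1` in which they differ. Linear quotients follow once some
generator has the form `x_q ui / x_p` with `p = 1` or `p > q` (`exists_trade`): it precedes `ui`, and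
its colon variable is `x_q`.

Such an exchange may be performed in a single factor of `ui`. If this is never possible, then
(`rigid_of_no_exchange`) no factor involves a variable after `x_q`, and, when `v_1 < u_1`, every
factor has `x_1`-exponent `v_1` or `v_1 + 1`. For `v_1 < u_1` this rests on `swap_le_of_linQuot`: if
`w < v` has the same `x_1`-exponent as `v`, and `x_p` is its last variable, then `x_1 w / x_p ≤ u`.
This is the one consequence of the hypothesis of linear quotients that is needed. It comes from
homology: linear quotients force the reduced Euler characteristic of each upper Koszul complex to
have a prescribed sign (`euler_of_linQuot`), and a violation of the inequality would produce, in a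
suitable multidegree, a complex with the wrong sign. For `v_1 = u_1`, being completely lexsegment
makes the segment the set of all monomials of degree `d` with that `x_1`-exponent
(`mem_of_level_eq`).

A degree count then shows that the `x_1`-exponent of `ui` exceeds that of `uj`. This is absurd if
`v_1 = u_1`. If `v_1 < u_1`, then `X = x_q ui / x_1` is itself a generator. Indeed, let `ui` have
exactly `r` factors with `x_1`-exponent `v_1`. By the degree count, `uj` has at least `r + 1` such
factors; let `A` be a product of `r + 1` of them, and let `B` be the product of all but one of the
remaining factors of `ui`. Split `X` into a factor `h` collecting its early variables and a factor `k`
collecting the late ones, with the degrees and `x_1`-exponents of `A` and `B` (`exists_split`). Then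
`h` dominates `A` and `k` is dominated by `B`, where dominance is generated by trading a variable
for an earlier one (`up_of_dominance`). The monomials `≥ v` with `x_1`-exponent `v_1` are closed under
such moves, and the monomials `≤ u` with `x_1`-exponent `v_1 + 1` under the inverse moves. Hence `h`
and `k` are products of `r + 1` and of `N - r - 1` elements of the segment, and `X = h k`.
-/

/-- Monomials of `K[x_1,…,x_n]`, encoded by their exponent vectors (`x_1` ↔ index `0`). -/
abbrev Mon (n : ℕ) := Fin n →₀ ℕ

/-- Total degree of a monomial. -/
def mdeg {n : ℕ} (m : Mon n) : ℕ := ∑ i, m i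

/-- `m <_lex m'` (so `m' >_lex m`) with `x_1 > x_2 > ⋯ > x_n`: at the first index where the
exponent vectors differ, `m'` has the larger exponent. -/
def LexLT {n : ℕ} (m m' : Mon n) : Prop :=
  ∃ i : Fin n, (∀ j, j < i → m j = m' j) ∧ m i < m' i

/-- `m ≤_lex m'`. -/
def LexLE {n : ℕ} (m m' : Mon n) : Prop := m = m' ∨ LexLT m m'

/-- `m >_revlex m'` for monomials of equal degree: at the last index where the exponent
vectors differ, `m` has the smaller exponent. -/
def RevLexGT {n : ℕ} (m m' : Mon n) : Prop :=
  ∃ s : Fin n, (∀ t, s < t → m t = m' t) ∧ m s < m' s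

/-- The decreasing revlexicographic order on monomials: `m <_σ m'` iff `deg m < deg m'`, or
the degrees agree and `m >_revlex m'`. -/
def DecRevLexLT {n : ℕ} (m m' : Mon n) : Prop :=
  mdeg m < mdeg m' ∨ (mdeg m = mdeg m' ∧ RevLexGT m m')

/-- The lexsegment set `L(u,v) = {w ∈ M_d : u ≥_lex w ≥_lex v}`. -/
def LSeg {n : ℕ} (u v : Mon n) (d : ℕ) : Set (Mon n) :=
  {w | mdeg w = d ∧ LexLE w u ∧ LexLE v w}

/-- `A` is a lexsegment set inside `M_e`. -/
def IsLexSegmentSet {n : ℕ} (A : Set (Mon n)) (e : ℕ) : Prop :=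
  ∃ u v : Mon n, mdeg u = e ∧ mdeg v = e ∧ LexLE v u ∧ A = LSeg u v e

/-- `(L(u,v))` is a completely lexsegment ideal: for every `k ≥ 0` the `k`-th shadow
`{m·w : m ∈ M_k, w ∈ L(u,v)}` is a lexsegment set in `M_{d+k}`. -/
def IsCompletelyLex {n : ℕ} (u v : Mon n) (d : ℕ) : Prop :=
  ∀ k : ℕ,
    IsLexSegmentSet {w | ∃ m w₀, mdeg m = k ∧ w₀ ∈ LSeg u v d ∧ w = m + w₀} (d + k)

/-- The set of products of `N` monomials from `B`; for `B` a set of monomials of a fixed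
degree `d` this is the minimal monomial generating set of `I^N`, `I = (B)`. -/
def prodSet {n : ℕ} (B : Set (Mon n)) (N : ℕ) : Set (Mon n) :=
  {m | ∃ f : Fin N → Mon n, (∀ i, f i ∈ B) ∧ m = ∑ i, f i}

/-- The equigenerated monomial ideal with (minimal) monomial generating set `G` has linear
quotients with respect to the order given by `prec` (`prec a b` = "`a` is listed before
`b`"): for generators `u_j` before `u_i` there are a generator `u_k` before `u_i` and a
variable `x_q` with `u_k / gcd(u_k,u_i) = x_q` and `x_q ∣ u_j / gcd(u_j,u_i)`. -/
def LinQuotOrder {n : ℕ} (G : Set (Mon n)) (prec : Mon n → Mon n → Prop) : Prop :=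
  ∀ uj ∈ G, ∀ ui ∈ G, prec uj ui →
    ∃ uk ∈ G, prec uk ui ∧ ∃ q : Fin n,
      (∀ p : Fin n, p ≠ q → uk p ≤ ui p) ∧ uk q = ui q + 1 ∧ ui q < uj q

/-- The equigenerated monomial ideal with minimal monomial generating set `G` has linear
quotients (with respect to some linear order of the generators). -/
def HasLinQuot {n : ℕ} (G : Set (Mon n)) : Prop :=
  ∃ prec : Mon n → Mon n → Prop,
    (∀ a ∈ G, ¬ prec a a) ∧
    (∀ a ∈ G, ∀ b ∈ G, ∀ c ∈ G, prec a b → prec b c → prec a c) ∧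
    (∀ a ∈ G, ∀ b ∈ G, a ≠ b → prec a b ∨ prec b a) ∧
    LinQuotOrder G prec

/-! ### Monomials and the lexicographic order -/

theorem lexLT_iff {n : ℕ} (a b : Mon n) : LexLT a b ↔ toLex a < toLex b := Iff.rfl

theorem lexLE_iff {n : ℕ} (a b : Mon n) : LexLE a b ↔ toLex a ≤ toLex b := by
  rw [LexLE, lexLT_iff, le_iff_eq_or_lt, toLex_inj]

theorem mem_LSeg_iff {n : ℕ} {u v w : Mon n} {d : ℕ} :
    w ∈ LSeg u v d ↔ mdeg w = d ∧ toLex w ≤ toLex u ∧ toLex v ≤ toLex w := by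
  simp only [LSeg, Set.mem_ofPred_eq, lexLE_iff]

theorem mdeg_add {n : ℕ} (a b : Mon n) : mdeg (a + b) = mdeg a + mdeg b := by
  simp [mdeg, Finset.sum_add_distrib]

theorem mdeg_single {n : ℕ} (i : Fin n) (c : ℕ) : mdeg (Finsupp.single i c) = c := by
  simp [mdeg, Finsupp.single_apply]

theorem finite_mdeg (n d : ℕ) : {w : Mon n | mdeg w = d}.Finite := by
  refine ((Finset.finsuppAntidiag Finset.univ d).finite_toSet).subset fun w hw => ?_
  simpa [mdeg] using hw

theorem finite_LSeg {n : ℕ} (u v : Mon n) (d : ℕ) : (LSeg u v d).Finite :=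
  (finite_mdeg n d).subset fun _ hw => hw.1

theorem lex_lt_of_zero {m : ℕ} {a b : Mon (m + 1)} (h : a 0 < b 0) : toLex a < toLex b :=
  (lexLT_iff a b).1 ⟨0, fun j hj => absurd hj (Fin.not_lt_zero j), h⟩

theorem le_of_lex_le {m : ℕ} {a b : Mon (m + 1)} (h : toLex a ≤ toLex b) : a 0 ≤ b 0 := by
  by_contra hlt
  exact absurd h (not_le.2 (lex_lt_of_zero (not_le.1 hlt)))

/-- Trading the variable `x_p` for an earlier variable `x_q` increases a monomial. -/
theorem lex_lt_of_swap {n : ℕ} {a b : Mon n} {p q : Fin n} (hqp : q < p)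
    (h : b + Finsupp.single p 1 = a + Finsupp.single q 1) : toLex a < toLex b := by
  refine (lexLT_iff a b).1 ⟨q, fun j hj => ?_, ?_⟩
  · have := DFunLike.congr_fun h j
    simp [hj.ne', (hj.trans hqp).ne'] at this
    exact this.symm
  · have := DFunLike.congr_fun h q
    simp [hqp.ne'] at this
    omega

theorem exists_exchange {n : ℕ} {a : Mon n} {p : Fin n} (q : Fin n) (hp : 0 < a p) :
    ∃ b : Mon n, b + Finsupp.single p 1 = a + Finsupp.single q 1 := by
  refine ⟨a - Finsupp.single p 1 + Finsupp.single q 1, ?_⟩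
  have : Finsupp.single p 1 ≤ a := by
    rw [Finsupp.single_le_iff]; omega
  rw [add_right_comm, tsub_add_cancel_of_le this]

theorem mdeg_eq_of_swap {n : ℕ} {a b : Mon n} {p q : Fin n}
    (h : b + Finsupp.single p 1 = a + Finsupp.single q 1) : mdeg b = mdeg a := by
  have := congrArg mdeg h
  simp only [mdeg_add, mdeg_single] at this
  omega

theorem swap_apply {n : ℕ} {a b : Mon n} {p q : Fin n}
    (h : b + Finsupp.single p 1 = a + Finsupp.single q 1) (i : Fin n) :
    b i + (if p = i then 1 else 0) = a i + (if q = i then 1 else 0) := by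
  simpa [Finsupp.single_apply] using DFunLike.congr_fun h i

theorem exists_eq_single {n : ℕ} {m : Mon n} (h : mdeg m = 1) :
    ∃ c, m = Finsupp.single c 1 := by
  have hne : m ≠ 0 := by
    rintro rfl
    simp [mdeg] at h
  obtain ⟨c, hc⟩ := Finsupp.ne_iff.1 hne
  have hle : Finsupp.single c 1 ≤ m := by
    rw [Finsupp.single_le_iff]
    simp at hc
    omega
  obtain ⟨r, rfl⟩ := exists_add_of_le hle
  refine ⟨c, ?_⟩
  rw [mdeg_add, mdeg_single] at h
  have hr : r = 0 := by
    ext i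
    have : r i ≤ mdeg r := Finset.single_le_sum (f := fun i => r i) (by simp) (Finset.mem_univ i)
    simp
    omega
  simp [hr]

/-! ### Linear quotients and an Euler characteristic -/

/-- The monomial `g · ∏_{i ∈ F} x_i` divides `M`. For `g` running over the generators of an
ideal `I`, the sets `F` for which this holds for some `g` are the faces of the upper Koszul complex
of `I` in the multidegree `M`. -/
def DivBy {n : ℕ} (M g : Mon n) (F : Finset (Fin n)) : Prop :=
  ∀ i, g i + (if i ∈ F then 1 else 0) ≤ M i

theorem exists_first {α : Type*} (S : Set α) (hS : S.Finite) (hne : S.Nonempty)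
    (r : α → α → Prop) (hirr : ∀ a ∈ S, ¬ r a a)
    (htr : ∀ a ∈ S, ∀ b ∈ S, ∀ c ∈ S, r a b → r b c → r a c) :
    ∃ a ∈ S, ∀ b ∈ S, ¬ r b a := by
  have : Finite S := hS
  let r' : S → S → Prop := fun a b => r a b
  have : IsTrans S r' := ⟨fun a b c => htr a a.2 b b.2 c c.2⟩
  have : Std.Irrefl r' := ⟨fun a => hirr a a.2⟩
  have hwf := Finite.wellFounded_of_trans_of_irrefl r'
  obtain ⟨x, hx⟩ := hne
  obtain ⟨a, -, ha⟩ := hwf.has_min Set.univ ⟨⟨x, hx⟩, trivial⟩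
  exact ⟨a, a.2, fun b hb => ha ⟨b, hb⟩ trivial⟩

open Classical in
/-- The faces of the Koszul complex contributed by one generator `g`, namely those `F` for which
`g` is the first generator with `g · x_F ∣ M`, form either an empty set, a single face with
`deg M - deg g` elements, or a set that is stable under adding and removing a vertex. -/
theorem signed_sum_first {n : ℕ} {G : Set (Mon n)} {prec : Mon n → Mon n → Prop}
    (hlq : LinQuotOrder G prec) (M g : Mon n) (hg : g ∈ G) (l : ℕ) (hM : mdeg M = mdeg g + l) :
    ∃ c : ℕ, ∑ F ∈ M.support.powerset,
      (if DivBy M g F ∧ ∀ g' ∈ G, prec g' g → ¬ DivBy M g' F then (-1 : ℤ) ^ F.card else 0)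
        = (-1) ^ l * c := by
  by_cases h : ∃ i, g i < M i ∧
      ∀ g' ∈ G, prec g' g → (∀ p, p ≠ i → g' p ≤ g p) → g' i ≠ g i + 1
  · obtain ⟨i, hi, hset⟩ := h
    refine ⟨0, ?_⟩
    have hiM : i ∈ M.support := by
      rw [Finsupp.mem_support_iff]; omega
    rw [← Finset.insert_erase hiM, Finset.sum_powerset_insert (Finset.notMem_erase i _),
      ← Finset.sum_add_distrib]
    simp only [Nat.cast_zero, mul_zero]
    refine Finset.sum_eq_zero fun F hF => ?_
    have hiF : i ∉ F := fun hc => by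
      simpa using Finset.mem_powerset.1 hF hc
    have key : (DivBy M g F ∧ ∀ g' ∈ G, prec g' g → ¬ DivBy M g' F) ↔
        (DivBy M g (insert i F) ∧ ∀ g' ∈ G, prec g' g → ¬ DivBy M g' (insert i F)) := by
      constructor
      · rintro ⟨h1, h2⟩
        refine ⟨fun j => ?_, fun g' hg' hp hd => h2 g' hg' hp fun j => ?_⟩
        · have := h1 j
          by_cases hj : j = i
          · subst hj; simp; omega
          · simpa [hj] using this
        · have := hd j
          by_cases hj : j = i
          · subst hj; simp [hiF]; simp at this; omega
          · simpa [hj] using this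
      · rintro ⟨h1, h2⟩
        refine ⟨fun j => ?_, fun g' hg' hp hd => ?_⟩
        · have := h1 j
          by_cases hj : j = i
          · subst hj; simp [hiF]; simp at this; omega
          · simpa [hj] using this
        · obtain ⟨uk, huk, hpk, q, hq1, hq2, hq3⟩ := hlq g' hg' g hg hp
          have hqi : q ≠ i := by
            rintro rfl
            exact hset uk huk hpk hq1 hq2
          refine h2 uk huk hpk fun j => ?_
          by_cases hj : j = q
          · subst hj
            have := hd j
            simp only [Finset.mem_insert, hqi, false_or]
            omega
          · have := h1 j
            have := hq1 j hj
            omega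
    rw [Finset.card_insert_of_notMem hiF, pow_succ]
    by_cases hc : DivBy M g F ∧ ∀ g' ∈ G, prec g' g → ¬ DivBy M g' F
    · rw [if_pos hc, if_pos (key.1 hc)]; ring
    · rw [if_neg hc, if_neg (fun h' => hc (key.2 h'))]; ring
  · push Not at h
    set F₀ : Finset (Fin n) := Finset.univ.filter fun i => g i < M i with hF₀
    have huniq : ∀ F, (DivBy M g F ∧ ∀ g' ∈ G, prec g' g → ¬ DivBy M g' F) →
        F = F₀ ∧ F.card = l := by
      rintro F ⟨h1, h2⟩
      have heq : ∀ i, g i + (if i ∈ F then 1 else 0) = M i := by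
        intro i
        by_contra hne
        have hlt : g i + (if i ∈ F then 1 else 0) < M i := lt_of_le_of_ne (h1 i) hne
        obtain ⟨g', hg', hp, hq1, hq2⟩ := h i (by omega)
        refine h2 g' hg' hp fun j => ?_
        by_cases hj : j = i
        · subst hj; omega
        · have := h1 j
          have := hq1 j hj
          omega
      constructor
      · ext i
        have := heq i
        by_cases hi : i ∈ F <;> simp [hi, hF₀] at this ⊢ <;> omega
      · have : ∑ i, (g i + (if i ∈ F then 1 else 0)) = ∑ i, M i :=
          Finset.sum_congr rfl fun i _ => heq i
        rw [Finset.sum_add_distrib] at this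
        simp only [Finset.sum_ite_mem, Finset.univ_inter, Finset.sum_const, smul_eq_mul,
          mul_one] at this
        simp only [mdeg] at hM
        omega
    by_cases hc : DivBy M g F₀ ∧ ∀ g' ∈ G, prec g' g → ¬ DivBy M g' F₀
    · refine ⟨1, ?_⟩
      have hmem : F₀ ∈ M.support.powerset := by
        rw [Finset.mem_powerset]
        intro i hi
        simp [hF₀] at hi
        rw [Finsupp.mem_support_iff]; omega
      rw [Finset.sum_eq_single_of_mem F₀ hmem, if_pos hc, (huniq F₀ hc).2]
      · simp
      · intro F _ hF
        rw [if_neg fun h' => hF (huniq F h').1]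
    · refine ⟨0, ?_⟩
      rw [Finset.sum_eq_zero]
      · simp
      · intro F _
        rw [if_neg fun h' => hc ((huniq F h').1 ▸ h')]

open Classical in
/-- If a monomial ideal generated in degree `d` has linear quotients, then the sum of
`(-1) ^ |F|` over the faces `F` of its upper Koszul complex in a multidegree of total degree `d + l`
is zero or has the sign `(-1) ^ l`: only faces with exactly `l` elements are critical. -/
theorem euler_of_linQuot {n : ℕ} {G : Set (Mon n)} (hfin : G.Finite) {d : ℕ}
    (hdeg : ∀ g ∈ G, mdeg g = d) (hG : HasLinQuot G) (M : Mon n) (l : ℕ) (hM : mdeg M = d + l) :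
    ∃ c : ℕ, ∑ F ∈ M.support.powerset,
      (if ∃ g ∈ G, DivBy M g F then (-1 : ℤ) ^ F.card else 0) = (-1) ^ l * c := by
  obtain ⟨prec, hirr, htr, htot, hlq⟩ := hG
  have hsplit : ∀ F : Finset (Fin n),
      (if ∃ g ∈ G, DivBy M g F then (-1 : ℤ) ^ F.card else 0) =
      ∑ g ∈ hfin.toFinset,
        (if DivBy M g F ∧ ∀ g' ∈ G, prec g' g → ¬ DivBy M g' F then (-1 : ℤ) ^ F.card else 0) := by
    intro F
    by_cases h : ∃ g ∈ G, DivBy M g F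
    · rw [if_pos h]
      obtain ⟨a, ⟨haG, haD⟩, hmin⟩ := exists_first {g | g ∈ G ∧ DivBy M g F}
        (hfin.subset fun _ hx => hx.1) h prec (fun a ha => hirr a ha.1)
        (fun a ha b hb c hc => htr a ha.1 b hb.1 c hc.1)
      rw [Finset.sum_eq_single_of_mem a (hfin.mem_toFinset.2 haG), if_pos]
      · exact ⟨haD, fun g' hg' hp hd => hmin g' ⟨hg', hd⟩ hp⟩
      · intro b hb hne
        rw [if_neg]
        rintro ⟨h1, h2⟩
        have hbG := hfin.mem_toFinset.1 hb
        rcases htot a haG b hbG hne.symm with h' | h'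
        · exact h2 a haG h' haD
        · exact hmin b ⟨hbG, h1⟩ h'
    · rw [if_neg h, Finset.sum_eq_zero]
      intro g hg
      rw [if_neg fun h' => h ⟨g, hfin.mem_toFinset.1 hg, h'.1⟩]
  have hterm : ∀ g : Mon n, ∃ c : ℕ, g ∈ G → ∑ F ∈ M.support.powerset,
      (if DivBy M g F ∧ ∀ g' ∈ G, prec g' g → ¬ DivBy M g' F then (-1 : ℤ) ^ F.card else 0)
        = (-1) ^ l * c := by
    intro g
    by_cases hg : g ∈ G
    · obtain ⟨c, hc⟩ := signed_sum_first hlq M g hg l (by rw [hdeg g hg, hM])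
      exact ⟨c, fun _ => hc⟩
    · exact ⟨0, fun h => absurd h hg⟩
  choose c hc using hterm
  refine ⟨∑ g ∈ hfin.toFinset, c g, ?_⟩
  rw [Finset.sum_congr rfl fun F _ => hsplit F, Finset.sum_comm, Nat.cast_sum, Finset.mul_sum]
  exact Finset.sum_congr rfl fun g hg => hc g (hfin.mem_toFinset.1 hg)

/-! ### Consequences of the hypotheses on the segment -/

theorem eq_of_le_of_mdeg {n : ℕ} {a b : Mon n} (h : ∀ i, a i ≤ b i) (hd : mdeg a = mdeg b) :
    a = b := by
  ext i
  exact (Finset.sum_eq_sum_iff_of_le fun i _ => h i).1 hd i (Finset.mem_univ i)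

/-- The first shadow of a completely lexsegment ideal is convex for the lexicographic order. -/
theorem shadow_convex {n : ℕ} {u v : Mon n} {d : ℕ} (hcomp : IsCompletelyLex u v d)
    {a b y : Mon n} (ha : a ∈ LSeg u v d) (hb : b ∈ LSeg u v d) (i j : Fin n)
    (hy : mdeg y = d + 1) (h1 : toLex (a + Finsupp.single i 1) ≤ toLex y)
    (h2 : toLex y ≤ toLex (b + Finsupp.single j 1)) :
    ∃ c, ∃ w ∈ LSeg u v d, w + Finsupp.single c 1 = y := by
  obtain ⟨u', v', -, -, -, hS⟩ := hcomp 1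
  have hmem : ∀ a ∈ LSeg u v d, ∀ i, a + Finsupp.single i 1 ∈ LSeg u' v' (d + 1) := by
    intro a ha i
    rw [← hS]
    exact ⟨Finsupp.single i 1, a, mdeg_single i 1, ha, add_comm _ _⟩
  have hyS : y ∈ LSeg u' v' (d + 1) := by
    rw [mem_LSeg_iff]
    exact ⟨hy, h2.trans (mem_LSeg_iff.1 (hmem b hb j)).2.1,
      (mem_LSeg_iff.1 (hmem a ha i)).2.2.trans h1⟩
  rw [← hS] at hyS
  obtain ⟨e, w, he, hw, rfl⟩ := hyS
  obtain ⟨c, rfl⟩ := exists_eq_single he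
  exact ⟨c, w, hw, add_comm _ _⟩

/-- If the end points have the same `x_1`-exponent, a completely lexsegment ideal is generated by
all monomials of its degree with that `x_1`-exponent. -/
theorem mem_of_level_eq {m d : ℕ} {u v : Mon (m + 1)} (hud : mdeg u = d) (hvd : mdeg v = d)
    (huv : toLex v ≤ toLex u) (hcomp : IsCompletelyLex u v d) (hab : u 0 = v 0)
    {q : Fin (m + 1)} (hq : q ≠ 0) {w : Mon (m + 1)} (hw : mdeg w = d) (hw0 : w 0 = v 0) :
    w ∈ LSeg u v d := by
  have hu : u ∈ LSeg u v d := mem_LSeg_iff.2 ⟨hud, le_rfl, huv⟩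
  have hv : v ∈ LSeg u v d := mem_LSeg_iff.2 ⟨hvd, huv, le_rfl⟩
  have hlevel : ∀ x ∈ LSeg u v d, x 0 = v 0 := fun x hx => by
    have h := mem_LSeg_iff.1 hx
    exact le_antisymm ((le_of_lex_le h.2.1).trans hab.le) (le_of_lex_le h.2.2)
  refine mem_LSeg_iff.2 ⟨hw, ?_, ?_⟩
  · -- The largest monomial with this `x_1`-exponent lies in the segment.
    obtain ⟨t, ⟨htd, ht0⟩, hmax⟩ := Set.exists_max_image {x : Mon (m + 1) | mdeg x = d ∧ x 0 = v 0}
      toLex ((finite_mdeg _ d).subset fun x hx => hx.1) ⟨w, hw, hw0⟩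
    have htL : t ∈ LSeg u v d := by
      by_contra htL
      have hut : toLex u < toLex t := by
        by_contra hle
        exact htL (mem_LSeg_iff.2 ⟨htd, not_lt.1 hle, hmax v ⟨hvd, rfl⟩⟩)
      have hm : m ≠ 0 := by
        rintro rfl
        exact hq (Fin.fin_one_eq_zero q)
      have hval : (1 : Fin (m + 1)).val = 1 := by rw [Fin.val_one', Nat.mod_eq_of_lt (by omega)]
      have h1 : (1 : Fin (m + 1)) ≠ 0 := by
        rw [Ne, Fin.ext_iff, hval]
        simp
      -- If `t > u`, then `x_2 t` lies in the shadow, so `t` or a larger `x_2 t / x_c` is in the segment.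
      obtain ⟨c, x, hx, hxc⟩ := shadow_convex hcomp hu hu 1 0 (y := t + Finsupp.single 1 1)
        (by rw [mdeg_add, mdeg_single, htd])
        (by rw [toLex_add, toLex_add]; exact (add_lt_add_left hut _).le)
        (by
          refine (lex_lt_of_zero ?_).le
          simp [h1, ht0, hab])
      have h0 := swap_apply hxc 0
      rw [hlevel x hx, ht0] at h0
      have hc0 : c ≠ 0 := by
        rintro rfl
        simp [h1] at h0
      rcases eq_or_ne c 1 with rfl | hc1
      · exact htL (add_right_cancel hxc ▸ hx)
      · have hlt : (1 : Fin (m + 1)) < c := by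
          rw [Fin.lt_def, hval]
          have : c.val ≠ 0 := fun h => hc0 (Fin.ext h)
          have : c.val ≠ 1 := fun h => hc1 (Fin.ext (h.trans hval.symm))
          omega
        exact absurd (hmax x ⟨hx.1, hlevel x hx⟩) (not_le.2 (lex_lt_of_swap hlt hxc))
    exact (hmax w ⟨hw, hw0⟩).trans (mem_LSeg_iff.1 htL).2.1
  · by_contra hlt
    rw [not_le] at hlt
    -- If `w < v`, then `x_1 w` lies in the shadow, and only as `x_1` times `w` itself.
    obtain ⟨c, x, hx, hxc⟩ := shadow_convex hcomp hv hv q 0 (y := w + Finsupp.single 0 1)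
      (by rw [mdeg_add, mdeg_single, hw])
      (by
        refine (lex_lt_of_zero ?_).le
        simp [hq, hw0])
      (by rw [toLex_add, toLex_add]; exact (add_lt_add_left hlt _).le)
    have h0 := swap_apply hxc 0
    rw [hlevel x hx, hw0] at h0
    have hc0 : c = 0 := by
      by_contra h
      simp [h] at h0
    subst hc0
    rw [add_right_cancel hxc] at hx
    exact absurd (mem_LSeg_iff.1 hx).2.2 (not_le.2 hlt)

open Classical in
/-- Let `w` be a monomial below the segment with the same `x_1`-exponent as `v`, and let `x_p` be
the last variable dividing `w`. Linear quotients force `x_1 w / x_p ≤ u`. For a lex-largest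
counterexample `w`, the upper Koszul complex of the ideal in the multidegree
`x_1 w ∏_{c ∈ C} x_c`, with `C` the set of the variables of `w` other than `x_1` and `x_p`, consists
of the sets not containing `C`, and of `C` itself; the Euler characteristic then has the sign
excluded by linear quotients. -/
theorem swap_le_of_linQuot {m d : ℕ} {u v : Mon (m + 1)} (hvd : mdeg v = d)
    (huv : toLex v ≤ toLex u) (hcomp : IsCompletelyLex u v d) (hlq : HasLinQuot (LSeg u v d))
    (hab : v 0 < u 0) {w y : Mon (m + 1)} {p : Fin (m + 1)} (hw : mdeg w = d) (hw0 : w 0 = v 0)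
    (hwv : toLex w < toLex v) (hp0 : p ≠ 0) (hp : 0 < w p) (hlast : ∀ j, p < j → w j = 0)
    (hy : y + Finsupp.single p 1 = w + Finsupp.single 0 1) : toLex y ≤ toLex u := by
  by_contra hcon
  obtain ⟨w, ⟨hw, hw0, hwv, p, y, hp0, hp, hlast, hy, hyu⟩, hmax⟩ := Set.exists_max_image
    {w : Mon (m + 1) | mdeg w = d ∧ w 0 = v 0 ∧ toLex w < toLex v ∧
      ∃ (p : Fin (m + 1)) (y : Mon (m + 1)), p ≠ 0 ∧ 0 < w p ∧ (∀ j, p < j → w j = 0) ∧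
        y + Finsupp.single p 1 = w + Finsupp.single 0 1 ∧ ¬ toLex y ≤ toLex u}
    toLex ((finite_mdeg _ d).subset fun x hx => hx.1)
    ⟨w, hw, hw0, hwv, p, y, hp0, hp, hlast, hy, hcon⟩
  -- By maximality of `w`, each `x_c w / x_p` with `x_c` strictly between `x_1` and `x_p` is `≥ v`.
  have hup : ∀ c, c ≠ 0 → c < p → ∀ g : Mon (m + 1),
      g + Finsupp.single p 1 = w + Finsupp.single c 1 → g ∈ LSeg u v d := by
    intro c hc0 hcp g hg
    have hgd : mdeg g = d := (mdeg_eq_of_swap hg).trans hw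
    have hg0 : g 0 = v 0 := by
      have := swap_apply hg 0
      simpa [hp0, hc0, hw0] using this
    refine mem_LSeg_iff.2 ⟨hgd, (lex_lt_of_zero (by omega)).le, ?_⟩
    by_contra hgv
    have hgc : 0 < g c := by
      have := swap_apply hg c
      simp [hcp.ne'] at this
      omega
    have hne : g.support.Nonempty := ⟨c, by rw [Finsupp.mem_support_iff]; omega⟩
    set p' := g.support.max' hne with hp'
    have hcp' : c ≤ p' := Finset.le_max' _ _ (by rw [Finsupp.mem_support_iff]; omega)
    have hp'pos : 0 < g p' := Nat.pos_of_ne_zero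
      (Finsupp.mem_support_iff.1 (Finset.max'_mem _ hne))
    have hp'last : ∀ j, p' < j → g j = 0 := by
      intro j hj
      by_contra hne'
      exact absurd (Finset.le_max' _ _ (Finsupp.mem_support_iff.2 hne')) (not_le.2 hj)
    obtain ⟨y', hy'⟩ := exists_exchange (0 : Fin (m + 1)) hp'pos
    have hyy : y' + Finsupp.single p' 1 = y + Finsupp.single c 1 := by
      apply add_right_cancel (b := Finsupp.single p 1)
      rw [hy', add_right_comm, hg, add_right_comm y, hy, add_right_comm]
    have hle : toLex y ≤ toLex y' := by
      rcases hcp'.eq_or_lt with h | h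
      · rw [← h] at hyy
        rw [add_right_cancel hyy]
      · exact (lex_lt_of_swap h hyy).le
    refine absurd (hmax g ⟨hgd, hg0, not_le.1 hgv, p', y', ?_, hp'pos, hp'last, hy',
      fun h => hyu (hle.trans h)⟩) (not_le.2 (lex_lt_of_swap hcp hg))
    intro h
    rw [h] at hcp'
    exact hc0 (Fin.le_zero_iff.1 hcp')
  have hv : v ∈ LSeg u v d := mem_LSeg_iff.2 ⟨hvd, huv, le_rfl⟩
  -- `x_1 w` lies in the shadow of the segment; this makes `C` a face.
  obtain ⟨c₀, w₀, hw₀, hwc₀⟩ := shadow_convex hcomp hv hv p 0 (y := w + Finsupp.single 0 1)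
    (by rw [mdeg_add, mdeg_single, hw])
    (by
      refine (lex_lt_of_zero ?_).le
      simp [hp0, hw0])
    (by rw [toLex_add, toLex_add]; exact (add_lt_add_left hwv _).le)
  set C : Finset (Fin (m + 1)) := (w.support.erase 0).erase p with hC
  have h0C : (0 : Fin (m + 1)) ∉ C := by simp [hC]
  have hpC : p ∉ C := by simp [hC]
  set M : Mon (m + 1) := w + Finsupp.single 0 1 + Finsupp.indicator C (fun _ _ => 1) with hMdef
  have hM : ∀ i, M i = w i + (if 0 = i then 1 else 0) + (if i ∈ C then 1 else 0) := by
    intro i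
    simp [hMdef, Finsupp.single_apply, Finsupp.indicator_apply]
  have hMd : mdeg M = d + (C.card + 1) := by
    have : ∑ i, M i = ∑ i, (w i + (if 0 = i then 1 else 0) + (if i ∈ C then 1 else 0)) :=
      Finset.sum_congr rfl fun i _ => hM i
    rw [mdeg, this, Finset.sum_add_distrib, Finset.sum_add_distrib]
    simp [← hw, mdeg]
    ring
  have hsupp : M.support = insert 0 (insert p C) := by
    ext i
    rw [Finsupp.mem_support_iff, hM]
    by_cases h0 : i = 0
    · simp [h0]
    by_cases hip : i = p
    · simp [hip]; omega
    by_cases hi : w i = 0 <;> simp [hC, h0, hip, hi, Ne.symm h0]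
  have hfree : ∀ F ⊆ insert 0 (insert p C), ¬ C ⊆ F → ∃ g ∈ LSeg u v d, DivBy M g F := by
    intro F hF hCF
    obtain ⟨c, hcC, hcF⟩ := Finset.not_subset.1 hCF
    obtain ⟨g, hg⟩ := exists_exchange c hp
    have hcC' := hcC
    simp only [hC, Finset.mem_erase, Finsupp.mem_support_iff] at hcC'
    have hcp : c < p := lt_of_le_of_ne (not_lt.1 fun h => hcC'.2.2 (hlast c h)) hcC'.1
    refine ⟨g, hup c hcC'.2.1 hcp g hg, fun i => ?_⟩
    have hgi := swap_apply hg i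
    rw [hM]
    by_cases hiF : i ∈ F
    · have hi := hF hiF
      have hci : c ≠ i := by rintro rfl; exact hcF hiF
      simp only [Finset.mem_insert] at hi
      rcases hi with rfl | rfl | hi
      · simp [hiF, hci] at hgi ⊢; omega
      · simp [hiF, hci] at hgi ⊢; omega
      · simp [hiF, hci, hi] at hgi ⊢; omega
    · by_cases hci : c = i
      · subst hci; simp [hcF, hcC] at hgi ⊢; omega
      · simp [hiF, hci] at hgi ⊢; omega
  have hCface : ∃ g ∈ LSeg u v d, DivBy M g C := by
    refine ⟨w₀, hw₀, fun i => ?_⟩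
    have := swap_apply hwc₀ i
    rw [hM]
    omega
  -- A larger face would have to come from `w` or from `y`, neither of which is in the segment.
  have hno : ∀ F, C ⊆ F → (0 ∈ F ∨ p ∈ F) → ¬ ∃ g ∈ LSeg u v d, DivBy M g F := by
    rintro F hCF h0p ⟨g, hgL, hg⟩
    have hgd := (mem_LSeg_iff.1 hgL).1
    by_cases h0 : 0 ∈ F
    · have : g = w := by
        refine eq_of_le_of_mdeg (fun i => ?_) (hgd.trans hw.symm)
        have h := hg i
        rw [hM] at h
        by_cases hiC : i ∈ C
        · have hi0 : 0 ≠ i := by rintro rfl; exact h0C hiC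
          simp [hiC, hCF hiC, hi0] at h; omega
        · by_cases hi0 : 0 = i
          · subst hi0; simp [h0, h0C] at h; omega
          · simp [hiC, hi0] at h; omega
      subst this
      exact absurd (mem_LSeg_iff.1 hgL).2.2 (not_le.2 hwv)
    · have hpF : p ∈ F := h0p.resolve_left h0
      have : g = y := by
        refine eq_of_le_of_mdeg (fun i => ?_) (hgd.trans (hw.symm.trans (mdeg_eq_of_swap hy).symm))
        have h := hg i
        have hyi := swap_apply hy i
        rw [hM] at h
        by_cases hiC : i ∈ C
        · have hi0 : 0 ≠ i := by rintro rfl; exact h0C hiC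
          have hip : p ≠ i := by rintro rfl; exact hpC hiC
          simp [hiC, hCF hiC, hi0, hip] at h hyi; omega
        · by_cases hip : p = i
          · subst hip; simp [hpF, hpC, hp0.symm] at h hyi; omega
          · simp [hiC, hip] at h hyi; omega
      subst this
      exact hyu (mem_LSeg_iff.1 hgL).2.1
  obtain ⟨c, hc⟩ := euler_of_linQuot (finite_LSeg u v d) (fun g hg => hg.1) hlq M (C.card + 1) hMd
  have h0T : (0 : Fin (m + 1)) ∉ insert p C := by simp [hp0.symm, h0C]
  rw [hsupp, Finset.sum_powerset_insert h0T, ← Finset.sum_add_distrib,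
    Finset.sum_eq_single_of_mem C (by simp)] at hc
  · -- The faces not containing `C` cancel in pairs, so `C` alone contributes, with the wrong sign.
    rw [if_pos hCface, if_neg (hno _ (Finset.subset_insert _ _) (by simp)), pow_succ] at hc
    have hne : ((-1 : ℤ) ^ C.card) ≠ 0 := by simp
    have : (1 : ℤ) = - c := by
      apply mul_left_cancel₀ hne
      linarith
    omega
  · intro F hF hne
    rw [Finset.mem_powerset] at hF
    have h0F : (0 : Fin (m + 1)) ∉ F := fun h => h0T (hF h)
    by_cases hCF : C ⊆ F
    · have hpF : p ∈ F := by
        by_contra hpF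
        refine hne (Finset.Subset.antisymm (fun i hi => ?_) hCF)
        rcases Finset.mem_insert.1 (hF hi) with rfl | h
        · exact absurd hi hpF
        · exact h
      rw [if_neg (hno F hCF (Or.inr hpF)),
        if_neg (hno _ (hCF.trans (Finset.subset_insert _ _)) (by simp))]
      simp
    · have hCF' : ¬ C ⊆ insert 0 F := fun h => hCF ((Finset.subset_insert_iff_of_notMem h0C).1 h)
      rw [if_pos (hfree F (hF.trans (Finset.subset_insert _ _)) hCF),
        if_pos (hfree _ (Finset.insert_subset_insert _ hF) hCF'),
        Finset.card_insert_of_notMem h0F, pow_succ]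
      ring

/-! ### Products and exchange moves -/

/-- `A` is a product of `r` monomials that all satisfy `S`. -/
def IsProd {n : ℕ} (S : Mon n → Prop) (r : ℕ) (A : Mon n) : Prop :=
  ∃ s : Multiset (Mon n), s.card = r ∧ (∀ x ∈ s, S x) ∧ s.sum = A

theorem mem_prodSet_iff {n : ℕ} {B : Set (Mon n)} {N : ℕ} {A : Mon n} :
    A ∈ prodSet B N ↔ IsProd (· ∈ B) N A := by
  constructor
  · rintro ⟨f, hf, rfl⟩
    exact ⟨Finset.univ.val.map f, by simp, by simpa using hf, rfl⟩
  · rintro ⟨s, rfl, hs, rfl⟩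
    refine ⟨fun i => s.toList.get (i.cast (by simp)), fun i => hs _ ?_, ?_⟩
    · rw [← Multiset.mem_toList]
      exact List.get_mem _ _
    · conv_lhs => rw [← s.coe_toList, Multiset.sum_coe]
      rw [← List.sum_ofFn]
      congr 1
      apply List.ext_get <;> simp

theorem multiset_sum_apply {n : ℕ} (s : Multiset (Mon n)) (i : Fin n) :
    s.sum i = (s.map fun x => x i).sum := by
  induction s using Multiset.induction_on with
  | empty => simp
  | cons a s ih => simp [ih]

theorem mdeg_sum {n d : ℕ} (s : Multiset (Mon n)) (h : ∀ x ∈ s, mdeg x = d) :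
    mdeg s.sum = s.card * d := by
  induction s using Multiset.induction_on with
  | empty => simp [mdeg]
  | cons a s ih =>
    rw [Multiset.sum_cons, mdeg_add, h a (Multiset.mem_cons_self _ _),
      ih fun x hx => h x (Multiset.mem_cons_of_mem hx), Multiset.card_cons]
    ring

theorem exists_mem_pos {n : ℕ} {s : Multiset (Mon n)} {p : Fin n} (h : 0 < s.sum p) :
    ∃ x ∈ s, 0 < x p := by
  by_contra! hc
  rw [multiset_sum_apply, Multiset.sum_eq_zero] at h
  · exact absurd h (lt_irrefl 0)
  · intro y hy
    obtain ⟨x, hx, rfl⟩ := Multiset.mem_map.1 hy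
    have := hc x hx
    omega

theorem isProd_exchange {n r : ℕ} {S : Mon n → Prop} {s : Multiset (Mon n)} (hr : s.card = r)
    (hs : ∀ x ∈ s, S x) {x y B : Mon n} {p q : Fin n} (hx : x ∈ s) (hy : S y)
    (hxy : y + Finsupp.single p 1 = x + Finsupp.single q 1)
    (hB : B + Finsupp.single p 1 = s.sum + Finsupp.single q 1) : IsProd S r B := by
  obtain ⟨s', rfl⟩ := Multiset.exists_cons_of_mem hx
  refine ⟨y ::ₘ s', by simpa using hr, ?_, ?_⟩
  · intro z hz
    rcases Multiset.mem_cons.1 hz with rfl | hz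
    · exact hy
    · exact hs z (Multiset.mem_cons_of_mem hz)
  · apply add_right_cancel (b := Finsupp.single p 1)
    rw [hB, Multiset.sum_cons, Multiset.sum_cons, add_right_comm, hxy, add_right_comm]

/-- `B` arises from `A` by trading a variable for an earlier one, `x_1` not being involved. -/
def Up {m : ℕ} (A B : Mon (m + 1)) : Prop :=
  ∃ p q : Fin (m + 1), q ≠ 0 ∧ q < p ∧ B + Finsupp.single p 1 = A + Finsupp.single q 1

theorem pos_of_swap {n : ℕ} {a b : Mon n} {p q : Fin n} (hpq : p ≠ q)
    (h : b + Finsupp.single p 1 = a + Finsupp.single q 1) : 0 < a p := by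
  have := swap_apply h p
  simp [hpq.symm] at this
  omega

theorem isProd_of_up {m r : ℕ} {S : Mon (m + 1) → Prop} (hS : ∀ x y, Up x y → S x → S y)
    {A B : Mon (m + 1)} (h : Relation.ReflTransGen Up A B) (hA : IsProd S r A) : IsProd S r B := by
  induction h with
  | refl => exact hA
  | tail _ h ih =>
    obtain ⟨s, hr, hs, rfl⟩ := ih
    obtain ⟨p, q, hq, hqp, hB⟩ := h
    obtain ⟨x, hx, hxp⟩ := exists_mem_pos (pos_of_swap hqp.ne' hB)
    obtain ⟨y, hy⟩ := exists_exchange q hxp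
    exact isProd_exchange hr hs hx (hS x y ⟨p, q, hq, hqp, hy⟩ (hs x hx)) hy hB

theorem isProd_of_down {m r : ℕ} {S : Mon (m + 1) → Prop} (hS : ∀ x y, Up x y → S y → S x)
    {A B : Mon (m + 1)} (h : Relation.ReflTransGen Up A B) (hB : IsProd S r B) : IsProd S r A := by
  induction h using Relation.ReflTransGen.head_induction_on with
  | refl => exact hB
  | head h _ ih =>
    obtain ⟨s, hr, hs, rfl⟩ := ih
    obtain ⟨p, q, hq, hqp, hB⟩ := h
    obtain ⟨x, hx, hxp⟩ := exists_mem_pos (pos_of_swap hqp.ne hB.symm)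
    obtain ⟨y, hy⟩ := exists_exchange p hxp
    exact isProd_exchange hr hs hx (hS y x ⟨p, q, hq, hqp, hy.symm⟩ (hs x hx)) hy hB.symm

/-! ### Dominance -/

/-- The degree of `a` in the variables after `x_i`. -/
def tailDeg {n : ℕ} (a : Mon n) (i : Fin n) : ℕ := ∑ j ∈ Finset.Ioi i, a j

/-- The degree of `a` in the variables before `x_i`. -/
def headDeg {n : ℕ} (a : Mon n) (i : Fin n) : ℕ := ∑ j ∈ Finset.Iio i, a j

theorem tailDeg_add {n : ℕ} (a b : Mon n) (i : Fin n) :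
    tailDeg (a + b) i = tailDeg a i + tailDeg b i := by
  simp [tailDeg, Finset.sum_add_distrib]

theorem tailDeg_single {n : ℕ} (p i : Fin n) (c : ℕ) :
    tailDeg (Finsupp.single p c) i = if i < p then c else 0 := by
  simp [tailDeg, Finsupp.single_apply]

theorem mdeg_eq_head_tail {n : ℕ} (a : Mon n) (i : Fin n) :
    mdeg a = headDeg a i + a i + tailDeg a i := by
  have h : (Finset.univ : Finset (Fin n)) = (Finset.Iio i ∪ {i}) ∪ Finset.Ioi i := by
    ext j
    rcases lt_trichotomy j i with h | h | h <;> simp [h, h.le]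
  rw [mdeg, headDeg, tailDeg, h, Finset.sum_union, Finset.sum_union, Finset.sum_singleton]
  · simp
  · rw [Finset.disjoint_left]
    intro j hj hj'
    rw [Finset.mem_union, Finset.mem_Iio, Finset.mem_singleton] at hj
    rw [Finset.mem_Ioi] at hj'
    rcases hj with hj | hj
    · exact lt_asymm hj hj'
    · exact hj'.ne' hj

theorem exists_first_diff {n : ℕ} {A B : Mon n} (h : A ≠ B) :
    ∃ q, (∀ j, j < q → A j = B j) ∧ A q ≠ B q := by
  rcases lt_or_gt_of_ne (fun h' => h (toLex_inj.1 h') : toLex A ≠ toLex B) with h | h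
  · obtain ⟨q, hq, hlt⟩ := (lexLT_iff _ _).2 h
    exact ⟨q, hq, hlt.ne⟩
  · obtain ⟨q, hq, hlt⟩ := (lexLT_iff _ _).2 h
    exact ⟨q, fun j hj => (hq j hj).symm, hlt.ne'⟩

/-- Dominance of degree sequences is generated by moves to earlier variables. -/
theorem up_of_dominance {m : ℕ} (A B : Mon (m + 1)) (h0 : A 0 = B 0) (hd : mdeg A = mdeg B)
    (ht : ∀ i, tailDeg B i ≤ tailDeg A i) : Relation.ReflTransGen Up A B := by
  induction hk : ∑ i, tailDeg A i using Nat.strong_induction_on generalizing A with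
  | _ k ih =>
  by_cases hAB : A = B
  · rw [hAB]
  obtain ⟨q, hq, hne⟩ := exists_first_diff hAB
  have hq0 : q ≠ 0 := by rintro rfl; exact hne h0
  have hhead : headDeg A q = headDeg B q :=
    Finset.sum_congr rfl fun j hj => hq j (Finset.mem_Iio.1 hj)
  have h1 := mdeg_eq_head_tail A q
  have h2 := mdeg_eq_head_tail B q
  have h3 := ht q
  have hex : ((Finset.Ioi q).filter fun j => 0 < A j).Nonempty := by
    by_contra hno
    rw [Finset.not_nonempty_iff_eq_empty, Finset.filter_eq_empty_iff] at hno
    have : tailDeg A q = 0 := Finset.sum_eq_zero fun j hj => by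
      have := hno hj
      omega
    omega
  -- The first variable after `x_q` that divides `A`.
  set p := ((Finset.Ioi q).filter fun j => 0 < A j).min' hex with hp
  have hpm := Finset.min'_mem _ hex
  rw [← hp, Finset.mem_filter, Finset.mem_Ioi] at hpm
  obtain ⟨hqp, hAp⟩ := hpm
  have hmin : ∀ j, q < j → j < p → A j = 0 := by
    intro j hj hjp
    by_contra hjn
    exact absurd (Finset.min'_le ((Finset.Ioi q).filter fun j => 0 < A j) j
      (by rw [Finset.mem_filter, Finset.mem_Ioi]; exact ⟨hj, Nat.pos_of_ne_zero hjn⟩)) (not_le.2 hjp)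
  obtain ⟨A', hA'⟩ := exists_exchange q hAp
  have htail : ∀ i, tailDeg A' i + (if i < p then 1 else 0) =
      tailDeg A i + (if i < q then 1 else 0) := by
    intro i
    have := congrArg (fun a => tailDeg a i) hA'
    simpa only [tailDeg_add, tailDeg_single] using this
  refine Relation.ReflTransGen.head ⟨p, q, hq0, hqp, hA'⟩ (ih _ ?_ A' ?_ ?_ ?_ rfl)
  · rw [← hk]
    refine Finset.sum_lt_sum (fun i _ => ?_) ⟨q, Finset.mem_univ q, ?_⟩
    · have := htail i
      by_cases hi : i < q
      · simp [hi, hi.trans hqp] at this; omega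
      · simp [hi] at this; omega
    · have := htail q
      simp [hqp] at this
      omega
  · have := swap_apply hA' 0
    have hp0 : p ≠ 0 := by rintro h; rw [h] at hqp; exact absurd hqp (Fin.not_lt_zero q)
    simpa [hq0, hp0, h0] using this
  · rw [mdeg_eq_of_swap hA', hd]
  · intro i
    have h4 := htail i
    have h5 := ht i
    by_cases hi : i < q
    · simp [hi, hi.trans hqp] at h4; omega
    by_cases hip : i < p
    · simp [hi, hip] at h4
      have h6 : tailDeg A i = tailDeg A q := by
        refine Finset.sum_subset (Finset.Ioi_subset_Ioi (not_lt.1 hi)) fun j hj hji => ?_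
        rw [Finset.mem_Ioi] at hj hji
        exact hmin j hj (lt_of_le_of_lt (not_lt.1 hji) hip)
      have h7 : tailDeg B i ≤ tailDeg B q :=
        Finset.sum_le_sum_of_subset (Finset.Ioi_subset_Ioi (not_lt.1 hi))
      omega
    · simp [hi, hip] at h4; omega

/-- Every monomial splits into a prefix of given degree and a suffix. -/
theorem exists_prefix {n : ℕ} (X : Mon n) (D : ℕ) (hD : D ≤ mdeg X) :
    ∃ h k : Mon n, h + k = X ∧ mdeg h = D ∧ ∀ i j, 0 < k i → 0 < h j → j ≤ i := by
  induction D with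
  | zero => exact ⟨0, X, by simp, by simp [mdeg], by simp⟩
  | succ D ih =>
    obtain ⟨h, k, hX, hh, hsep⟩ := ih (by omega)
    have hk : k.support.Nonempty := by
      rw [Finset.nonempty_iff_ne_empty, Ne, Finsupp.support_eq_empty]
      rintro rfl
      rw [add_zero] at hX
      subst hX
      omega
    obtain ⟨c, hc, hcmin⟩ : ∃ c, k c ≠ 0 ∧ ∀ i, k i ≠ 0 → c ≤ i :=
      ⟨k.support.min' hk, Finsupp.mem_support_iff.1 (Finset.min'_mem _ hk),
        fun i hi => Finset.min'_le _ _ (Finsupp.mem_support_iff.2 hi)⟩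
    have hle : Finsupp.single c 1 ≤ k := by rw [Finsupp.single_le_iff]; omega
    obtain ⟨k', rfl⟩ := exists_add_of_le hle
    refine ⟨h + Finsupp.single c 1, k', by rw [← hX, add_assoc], by rw [mdeg_add, mdeg_single, hh],
      fun i j hi hj => ?_⟩
    have hik : 0 < (Finsupp.single c 1 + k' : Mon n) i := by simp; omega
    by_cases hjc : j = c
    · rw [hjc]
      exact hcmin i hik.ne'
    · refine hsep i j hik ?_
      simpa [Finsupp.single_apply, Ne.symm hjc] using hj

theorem tailDeg_le_of_head {n : ℕ} {a b : Mon n} {i : Fin n} (hd : mdeg a = mdeg b)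
    (h : ∀ l, l ≤ i → a l ≤ b l) : tailDeg b i ≤ tailDeg a i := by
  have h1 := mdeg_eq_head_tail a i
  have h2 := mdeg_eq_head_tail b i
  have h3 : headDeg a i ≤ headDeg b i :=
    Finset.sum_le_sum fun l hl => h l (Finset.mem_Iio.1 hl).le
  have h4 := h i le_rfl
  omega

theorem exists_pos_of_tailDeg {n : ℕ} {a : Mon n} {i : Fin n} (h : tailDeg a i ≠ 0) :
    ∃ j, i < j ∧ 0 < a j := by
  obtain ⟨j, hj, hne⟩ := Finset.exists_ne_zero_of_sum_ne_zero h
  exact ⟨j, Finset.mem_Ioi.1 hj, Nat.pos_of_ne_zero hne⟩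

/-- If `X` has the total degree and the `x_1`-degree of `A B`, is divisible by `B` away from `x_1`,
exceeds `A` in the variables between `x_1` and `x_q`, and involves no variable after `x_q`, then `X`
splits into a factor that arises from `A` by upward moves and one that yields `B` by upward moves.
The first factor collects the earliest variables of `X`. -/
theorem exists_split {m : ℕ} {A B X : Mon (m + 1)} {q : Fin (m + 1)} (h0 : X 0 = A 0 + B 0)
    (hd : mdeg X = mdeg A + mdeg B) (hA : ∀ i, i ≠ 0 → i < q → A i ≤ X i)
    (hB : ∀ i, i ≠ 0 → B i ≤ X i) (hX : ∀ i, q < i → X i = 0) :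
    ∃ h k, h + k = X ∧ Relation.ReflTransGen Up A h ∧ Relation.ReflTransGen Up k B := by
  have hA0 := mdeg_eq_head_tail A 0
  have hB0 := mdeg_eq_head_tail B 0
  obtain ⟨X', hX', hX'0⟩ : ∃ X' : Mon (m + 1), Finsupp.single 0 (X 0) + X' = X ∧ X' 0 = 0 :=
    ⟨X.erase 0, Finsupp.single_add_erase 0 X, Finsupp.erase_same⟩
  have hX'd : mdeg X' + X 0 = mdeg X := by
    conv_rhs => rw [← hX', mdeg_add, mdeg_single]
    exact add_comm _ _
  have hX'a : ∀ i, i ≠ 0 → X' i = X i := fun i hi => by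
    conv_rhs => rw [← hX']
    simp [hi.symm]
  obtain ⟨h, k, hhk, hh, hsep⟩ := exists_prefix X' (mdeg A - A 0) (by omega)
  have happ : ∀ i, h i + k i = X' i := fun i => DFunLike.congr_fun hhk i
  have hmd : mdeg h + mdeg k = mdeg X' := by rw [← mdeg_add, hhk]
  have hsum : (Finsupp.single 0 (A 0) + h) + (Finsupp.single 0 (B 0) + k) = X := by
    rw [add_add_add_comm, ← Finsupp.single_add, ← h0, hhk, hX']
  have h00 := happ 0
  have hcut : ∀ i, tailDeg h i ≠ 0 → i < q ∧ ∀ l, l ≤ i → k l = 0 := by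
    intro i hi
    obtain ⟨j, hij, hj⟩ := exists_pos_of_tailDeg hi
    refine ⟨?_, fun l hl => ?_⟩
    · by_contra hiq
      have h1 := hX j (lt_of_le_of_lt (not_lt.1 hiq) hij)
      have h2 := hX'a j (Fin.ne_zero_of_lt hij)
      have h3 := happ j
      omega
    · by_contra hl'
      exact absurd (hsep l j (Nat.pos_of_ne_zero hl') hj) (not_le.2 (lt_of_le_of_lt hl hij))
  refine ⟨_, _, hsum, up_of_dominance _ _ ?_ ?_ fun i => ?_, up_of_dominance _ _ ?_ ?_ fun i => ?_⟩
  · simp; omega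
  · rw [mdeg_add, mdeg_single]; omega
  · by_cases hi : tailDeg h i = 0
    · simp [tailDeg_add, tailDeg_single, hi]
    obtain ⟨hiq, hk⟩ := hcut i hi
    refine tailDeg_le_of_head (by rw [mdeg_add, mdeg_single]; omega) fun l hl => ?_
    by_cases hl0 : l = 0
    · simp [hl0]
    have h1 := hA l hl0 (lt_of_le_of_lt hl hiq)
    have h2 := happ l
    have h3 := hX'a l hl0
    have h4 := hk l hl
    rw [Finsupp.add_apply]
    omega
  · simp; omega
  · rw [mdeg_add, mdeg_single]; omega
  · by_cases hi : tailDeg h i = 0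
    · have h1 := congrArg (fun a => tailDeg a i) hsum
      simp only [tailDeg_add, tailDeg_single, Fin.not_lt_zero, if_false, hi, zero_add] at h1
      rw [tailDeg_add, tailDeg_single, if_neg (Fin.not_lt_zero i), zero_add, h1]
      exact Finset.sum_le_sum fun l hl => hB l (Fin.ne_zero_of_lt (Finset.mem_Ioi.1 hl))
    obtain ⟨-, hk⟩ := hcut i hi
    refine tailDeg_le_of_head (by rw [mdeg_add, mdeg_single]; omega) fun l hl => ?_
    by_cases hl0 : l = 0
    · subst hl0
      simp; omega
    · simp [hk l hl, Ne.symm hl0]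

/-! ### The exchange property of the powers -/

theorem mem_of_level_low {m d : ℕ} {u v x : Mon (m + 1)} (hab : v 0 < u 0) (hx : mdeg x = d)
    (hx0 : x 0 = v 0) (hvx : toLex v ≤ toLex x) : x ∈ LSeg u v d :=
  mem_LSeg_iff.2 ⟨hx, (lex_lt_of_zero (by omega)).le, hvx⟩

theorem mem_of_level_high {m d : ℕ} {u v x : Mon (m + 1)} (hx : mdeg x = d)
    (hx0 : v 0 < x 0) (hxu : toLex x ≤ toLex u) : x ∈ LSeg u v d :=
  mem_LSeg_iff.2 ⟨hx, hxu, (lex_lt_of_zero hx0).le⟩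

/-- A monomial of the segment that leaves it whenever `x_1` or a variable after `x_q` is traded for
`x_q` involves no variable after `x_q`, and its `x_1`-exponent is at most one larger than that of
`v`. -/
theorem rigid_of_no_exchange {m d : ℕ} {u v : Mon (m + 1)} (hud : mdeg u = d) (hvd : mdeg v = d)
    (huv : toLex v ≤ toLex u) (hcomp : IsCompletelyLex u v d) (hlq : HasLinQuot (LSeg u v d))
    {q : Fin (m + 1)} (hq : q ≠ 0) {x : Mon (m + 1)} (hx : x ∈ LSeg u v d)
    (hno : ∀ p y, p = 0 ∨ q < p → y + Finsupp.single p 1 = x + Finsupp.single q 1 →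
      y ∉ LSeg u v d) :
    (∀ p, q < p → x p = 0) ∧ (v 0 < u 0 → x 0 ≤ v 0 + 1) := by
  obtain ⟨hxd, hxu, hvx⟩ := mem_LSeg_iff.1 hx
  have hx0 := le_of_lex_le hvx
  have hx0' := le_of_lex_le hxu
  have hlow : v 0 < u 0 → x 0 ≤ v 0 + 1 := by
    intro hab
    by_contra hlev
    obtain ⟨y, hy⟩ := exists_exchange q (show 0 < x 0 by omega)
    have hy0 := swap_apply hy 0
    simp only [if_true, if_neg hq] at hy0
    exact hno 0 y (Or.inl rfl) hy (mem_LSeg_iff.2 ⟨(mdeg_eq_of_swap hy).trans hxd,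
      (lex_lt_of_zero (by omega)).le, (lex_lt_of_zero (by omega)).le⟩)
  refine ⟨?_, hlow⟩
  by_contra! hcon
  obtain ⟨p₀, hqp₀, hp₀⟩ := hcon
  -- The last variable dividing `x`.
  obtain ⟨p, hp, hlast⟩ : ∃ p, x p ≠ 0 ∧ ∀ j, x j ≠ 0 → j ≤ p := by
    have hne : x.support.Nonempty := ⟨p₀, Finsupp.mem_support_iff.2 hp₀⟩
    exact ⟨x.support.max' hne, Finsupp.mem_support_iff.1 (Finset.max'_mem _ hne),
      fun j hj => Finset.le_max' _ _ (Finsupp.mem_support_iff.2 hj)⟩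
  have hqp : q < p := hqp₀.trans_le (hlast p₀ hp₀)
  have hp0 : p ≠ 0 := Fin.ne_zero_of_lt hqp
  obtain ⟨y, hy⟩ := exists_exchange q (Nat.pos_of_ne_zero hp)
  have hyd : mdeg y = d := (mdeg_eq_of_swap hy).trans hxd
  have hy0 : y 0 = x 0 := by
    have := swap_apply hy 0
    simpa [hq, hp0] using this
  have hvy : toLex v ≤ toLex y := hvx.trans (lex_lt_of_swap hqp hy).le
  refine hno p y (Or.inr hqp) hy ?_
  have huv0 := le_of_lex_le huv
  rcases huv0.lt_or_eq with hab | hab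
  · have hlev := hlow hab
    rcases hx0.lt_or_eq with hlt | heq
    · -- Here `x_q x / x_1` has the `x_1`-exponent of `v` but is not in the segment.
      obtain ⟨w, hw⟩ := exists_exchange q (show 0 < x 0 by omega)
      have hw0 := swap_apply hw 0
      simp only [if_true, if_neg hq] at hw0
      have hwd : mdeg w = d := (mdeg_eq_of_swap hw).trans hxd
      have hwv : toLex w < toLex v := by
        by_contra hwv
        exact hno 0 w (Or.inl rfl) hw (mem_of_level_low hab hwd (by omega) (not_lt.1 hwv))
      have hwp : ∀ j, q < j → w j = x j := fun j hj => by
        have := swap_apply hw j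
        simpa [hj.ne, (Fin.ne_zero_of_lt hj).symm] using this
      refine mem_LSeg_iff.2 ⟨hyd, ?_, hvy⟩
      refine swap_le_of_linQuot hvd huv hcomp hlq hab hwd (by omega) hwv hp0
        (by rw [hwp p hqp]; omega) (fun j hj => ?_) (hy.trans hw.symm)
      rw [hwp j (hqp.trans hj)]
      by_contra hj'
      exact absurd (hlast j hj') (not_le.2 hj)
    · exact mem_of_level_low hab hyd (by omega) hvy
  · exact mem_of_level_eq hud hvd huv hcomp hab.symm hq hyd (by omega)

theorem level_sum_le {m b : ℕ} (s : Multiset (Mon (m + 1))) (h : ∀ x ∈ s, b ≤ x 0) :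
    s.card * b + (s.filter fun x => x 0 ≠ b).card ≤ s.sum 0 := by
  induction s using Multiset.induction_on with
  | empty => simp
  | cons a s ih =>
    have h1 := ih fun x hx => h x (Multiset.mem_cons_of_mem hx)
    have h2 := h a (Multiset.mem_cons_self _ _)
    by_cases ha : a 0 = b
    · simp [ha, add_mul]; simp at h1; omega
    · simp [ha, add_mul]; simp at h1; omega

theorem level_sum_eq {m b : ℕ} (s : Multiset (Mon (m + 1)))
    (h : ∀ x ∈ s, x 0 = b ∨ x 0 = b + 1) :
    s.sum 0 = s.card * b + (s.filter fun x => x 0 ≠ b).card := by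
  induction s using Multiset.induction_on with
  | empty => simp
  | cons a s ih =>
    have h1 := ih fun x hx => h x (Multiset.mem_cons_of_mem hx)
    have h2 := h a (Multiset.mem_cons_self _ _)
    by_cases ha : a 0 = b
    · simp [ha, add_mul]; simp at h1; omega
    · simp [ha, add_mul]; simp at h1; omega

theorem level_sum_const {m b : ℕ} (s : Multiset (Mon (m + 1))) (h : ∀ x ∈ s, x 0 = b) :
    s.sum 0 = s.card * b := by
  rw [level_sum_eq s fun x hx => Or.inl (h x hx),
    Multiset.filter_eq_nil.2 fun x hx hne => hne (h x hx)]
  simp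

theorem exists_le_card_eq {α : Type*} {s : Multiset α} {k : ℕ} (h : k ≤ s.card) :
    ∃ t ≤ s, t.card = k := by
  have hpos : 0 < (Multiset.powersetCard k s).card := by
    rw [Multiset.card_powersetCard]
    exact Nat.choose_pos h
  obtain ⟨t, ht⟩ := Multiset.card_pos_iff_exists_mem.1 hpos
  exact ⟨t, Multiset.mem_powersetCard.1 ht⟩

theorem sum_apply_le_of_le {n : ℕ} {s t : Multiset (Mon n)} (h : s ≤ t) (i : Fin n) :
    s.sum i ≤ t.sum i := by
  obtain ⟨r, rfl⟩ := Multiset.le_iff_exists_add.1 h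
  simp

/-- The exchange property that yields linear quotients: if a generator `ui` of the power has a
smaller `x_q`-exponent than another generator with the same exponents strictly between `x_1` and
`x_q`, then trading `x_1` or some variable after `x_q` for `x_q` turns `ui` into a generator. -/
theorem exists_trade {m d N : ℕ} {u v : Mon (m + 1)} (hud : mdeg u = d) (hvd : mdeg v = d)
    (huv : toLex v ≤ toLex u) (hcomp : IsCompletelyLex u v d) (hlq : HasLinQuot (LSeg u v d))
    {ui uj : Mon (m + 1)} (hi : IsProd (· ∈ LSeg u v d) N ui) (hj : IsProd (· ∈ LSeg u v d) N uj)
    {q : Fin (m + 1)} (hq : q ≠ 0) (heq : ∀ j, j ≠ 0 → j < q → uj j = ui j)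
    (hlt : ui q < uj q) :
    ∃ p uk, (p = 0 ∨ q < p) ∧ uk + Finsupp.single p 1 = ui + Finsupp.single q 1 ∧
      IsProd (· ∈ LSeg u v d) N uk := by
  by_contra! hno
  obtain ⟨s, hsN, hs, rfl⟩ := hi
  obtain ⟨t, htN, ht, rfl⟩ := hj
  have hrigid : ∀ x ∈ s, (∀ p, q < p → x p = 0) ∧ (v 0 < u 0 → x 0 ≤ v 0 + 1) := by
    intro x hx
    refine rigid_of_no_exchange hud hvd huv hcomp hlq hq (hs x hx) fun p y hp hy hyL => ?_
    have hpq : p ≠ q := by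
      rcases hp with rfl | hp
      · exact hq.symm
      · exact hp.ne'
    have hxp : 0 < s.sum p := by
      obtain ⟨s', rfl⟩ := Multiset.exists_cons_of_mem hx
      have := pos_of_swap hpq hy
      simp
      omega
    obtain ⟨B, hB⟩ := exists_exchange q hxp
    exact hno p B hp hB (isProd_exchange hsN hs hx hyL hy hB)
  have hs0 : ∀ p, q < p → s.sum p = 0 := by
    intro p hp
    by_contra hne
    obtain ⟨x, hx, hxp⟩ := exists_mem_pos (Nat.pos_of_ne_zero hne)
    have := (hrigid x hx).1 p hp
    omega
  have hsd := mdeg_sum s fun x hx => (hs x hx).1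
  have htd := mdeg_sum t fun x hx => (ht x hx).1
  -- Nothing after `x_q` divides `ui`, so `ui` makes up for its smaller `x_q`-exponent in `x_1`.
  have hlt0 : t.sum 0 < s.sum 0 := by
    by_contra hge
    have h1 : mdeg s.sum < mdeg t.sum := by
      refine Finset.sum_lt_sum (fun i _ => ?_) ⟨q, Finset.mem_univ q, hlt⟩
      by_cases hi0 : i = 0
      · rw [hi0]; omega
      rcases lt_trichotomy i q with h | rfl | h
      · exact (heq i hi0 h).ge
      · exact hlt.le
      · rw [hs0 i h]; exact Nat.zero_le _
    rw [hsd, htd, hsN, htN] at h1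
    exact lt_irrefl _ h1
  have hge : ∀ x ∈ LSeg u v d, v 0 ≤ x 0 := fun x hx => le_of_lex_le (mem_LSeg_iff.1 hx).2.2
  have hle : ∀ x ∈ LSeg u v d, x 0 ≤ u 0 := fun x hx => le_of_lex_le (mem_LSeg_iff.1 hx).2.1
  have htl := level_sum_le t fun x hx => hge x (ht x hx)
  rcases (le_of_lex_le huv).lt_or_eq with hab | hab
  swap
  · have := level_sum_const s fun x hx =>
      le_antisymm ((hle x (hs x hx)).trans hab.ge) (hge x (hs x hx))
    rw [hsN] at this
    rw [htN] at htl
    omega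
  have hsl := level_sum_eq (b := v 0) s fun x hx => by
    have h1 := hge x (hs x hx)
    have h2 := (hrigid x hx).2 hab
    omega
  have htf := congrArg Multiset.card (Multiset.filter_add_not (fun x => x 0 = v 0) t)
  have hsf := congrArg Multiset.card (Multiset.filter_add_not (fun x => x 0 = v 0) s)
  rw [Multiset.card_add] at htf hsf
  rw [htN] at htl htf
  rw [hsN] at hsl hsf
  obtain ⟨r, hr⟩ : ∃ r, (s.filter fun x => x 0 = v 0).card = r := ⟨_, rfl⟩
  -- `t` has more factors with the `x_1`-exponent of `v` than `s`.
  obtain ⟨t', ht', ht'c⟩ : ∃ t' ≤ t.filter fun x => x 0 = v 0, t'.card = r + 1 := by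
    refine exists_le_card_eq ?_
    simp only [ne_eq] at *
    omega
  have ht'm : ∀ x ∈ t', x ∈ LSeg u v d ∧ x 0 = v 0 := fun x hx =>
    ⟨ht x (Multiset.mem_filter.1 (Multiset.mem_of_le ht' hx)).1,
      (Multiset.mem_filter.1 (Multiset.mem_of_le ht' hx)).2⟩
  obtain ⟨y, hy⟩ : ∃ y, y ∈ s.filter fun x => x 0 ≠ v 0 := by
    apply Multiset.card_pos_iff_exists_mem.1
    omega
  obtain ⟨s', hs'⟩ := Multiset.exists_cons_of_mem hy
  have hs's : s' ≤ s := (Multiset.le_cons_self s' y).trans (hs' ▸ Multiset.filter_le _ _)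
  have hs'm : ∀ x ∈ s', x ∈ LSeg u v d ∧ x 0 = v 0 + 1 := by
    intro x hx
    have hxs := Multiset.mem_of_le hs's hx
    have hxf : x ∈ s.filter fun x => x 0 ≠ v 0 := hs' ▸ Multiset.mem_cons_of_mem hx
    have h1 := (Multiset.mem_filter.1 hxf).2
    have h2 := hge x (hs x hxs)
    have h3 := (hrigid x hxs).2 hab
    exact ⟨hs x hxs, by omega⟩
  have hs'c : N = r + s'.card + 1 := by
    have := congrArg Multiset.card hs'
    rw [Multiset.card_cons] at this
    simp only [ne_eq] at *
    omega
  obtain ⟨X, hX⟩ := exists_exchange q (show 0 < s.sum 0 by omega)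
  have hXa : ∀ i, i ≠ 0 → X i = s.sum i + if q = i then 1 else 0 := fun i hi => by
    simpa [hi.symm] using swap_apply hX i
  have hX0 := swap_apply hX 0
  simp only [if_true, if_neg hq] at hX0
  have hA0 := level_sum_const t' fun x hx => (ht'm x hx).2
  have hB0 := level_sum_const s' fun x hx => (hs'm x hx).2
  obtain ⟨h, k, hhk, hup, hdown⟩ := exists_split (A := t'.sum) (B := s'.sum) (X := X) (q := q)
    (by
      have hc := congrArg Multiset.card hs'
      rw [Multiset.card_cons] at hc
      rw [hc, hs'c] at hsl
      rw [hA0, hB0, ht'c]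
      have : s.sum 0 = (r + 1) * v 0 + s'.card * (v 0 + 1) + 1 := by rw [hsl]; ring
      omega)
    (by
      rw [mdeg_eq_of_swap hX, hsd, mdeg_sum t' fun x hx => (ht'm x hx).1.1,
        mdeg_sum s' fun x hx => (hs'm x hx).1.1, hsN, ht'c, hs'c]
      ring)
    (fun i hi0 hiq => by
      rw [hXa i hi0, ← heq i hi0 hiq]
      exact (sum_apply_le_of_le (ht'.trans (Multiset.filter_le _ _)) i).trans (Nat.le_add_right _ _))
    (fun i hi0 => by
      rw [hXa i hi0]
      exact (sum_apply_le_of_le hs's i).trans (Nat.le_add_right _ _))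
    (fun i hi => by rw [hXa i (Fin.ne_zero_of_lt hi), hs0 i hi, if_neg hi.ne])
  have hlev : ∀ x y : Mon (m + 1), Up x y → y 0 = x 0 ∧ mdeg y = mdeg x ∧ toLex x ≤ toLex y := by
    rintro x y ⟨p, q, hq, hqp, hxy⟩
    refine ⟨?_, mdeg_eq_of_swap hxy, (lex_lt_of_swap hqp hxy).le⟩
    simpa [hq, Fin.ne_zero_of_lt hqp] using swap_apply hxy 0
  obtain ⟨s₁, hs₁c, hs₁, hs₁h⟩ : IsProd (fun x => mdeg x = d ∧ x 0 = v 0 ∧ toLex v ≤ toLex x)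
      (r + 1) h := by
    refine isProd_of_up (fun x y hxy hx => ?_) hup ⟨t', ht'c, fun x hx => ?_, rfl⟩
    · obtain ⟨h1, h2, h3⟩ := hlev x y hxy
      exact ⟨h2.trans hx.1, h1.trans hx.2.1, hx.2.2.trans h3⟩
    · obtain ⟨h1, h2⟩ := ht'm x hx
      exact ⟨h1.1, h2, (mem_LSeg_iff.1 h1).2.2⟩
  obtain ⟨s₂, hs₂c, hs₂, hs₂k⟩ : IsProd (fun x => mdeg x = d ∧ x 0 = v 0 + 1 ∧ toLex x ≤ toLex u)
      s'.card k := by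
    refine isProd_of_down (fun x y hxy hx => ?_) hdown ⟨s', rfl, fun x hx => ?_, rfl⟩
    · obtain ⟨h1, h2, h3⟩ := hlev x y hxy
      exact ⟨h2.symm.trans hx.1, h1.symm.trans hx.2.1, h3.trans hx.2.2⟩
    · obtain ⟨h1, h2⟩ := hs'm x hx
      exact ⟨h1.1, h2, (mem_LSeg_iff.1 h1).2.1⟩
  refine hno 0 X (Or.inl rfl) hX ⟨s₁ + s₂, ?_, fun x hx => ?_, ?_⟩
  · rw [Multiset.card_add, hs₁c, hs₂c]; omega
  · rcases Multiset.mem_add.1 hx with hx | hx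
    · obtain ⟨h1, h2, h3⟩ := hs₁ x hx
      exact mem_of_level_low hab h1 h2 h3
    · obtain ⟨h1, h2, h3⟩ := hs₂ x hx
      exact mem_of_level_high h1 (by omega) h3
  · rw [Multiset.sum_add, hs₁h, hs₂k, hhk]

/-- `a` precedes `b`: `a` is larger in the lexicographic order on the variables other than `x_1`. -/
def Prec {m : ℕ} (a b : Mon (m + 1)) : Prop :=
  ∃ q, q ≠ 0 ∧ (∀ j, j ≠ 0 → j < q → a j = b j) ∧ b q < a q

theorem prec_trans {m : ℕ} {a b c : Mon (m + 1)} (hab : Prec a b) (hbc : Prec b c) : Prec a c := by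
  obtain ⟨q, hq, h1, h2⟩ := hab
  obtain ⟨q', hq', h1', h2'⟩ := hbc
  rcases lt_trichotomy q q' with h | rfl | h
  · exact ⟨q, hq, fun j hj hjq => (h1 j hj hjq).trans (h1' j hj (hjq.trans h)), by
      rw [← h1' q hq h]; exact h2⟩
  · exact ⟨q, hq, fun j hj hjq => (h1 j hj hjq).trans (h1' j hj hjq), h2'.trans h2⟩
  · exact ⟨q', hq', fun j hj hjq => (h1 j hj (hjq.trans h)).trans (h1' j hj hjq), by
      rw [h1 q' hq' h]; exact h2'⟩

theorem prec_or_prec {m : ℕ} {a b : Mon (m + 1)} (hd : mdeg a = mdeg b) (hab : a ≠ b) :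
    Prec a b ∨ Prec b a := by
  have hne : a.erase 0 ≠ b.erase 0 := by
    intro h
    have happ : ∀ i, i ≠ 0 → a i = b i := fun i hi => by
      simpa [hi] using DFunLike.congr_fun h i
    have h1 := mdeg_eq_head_tail a 0
    have h2 := mdeg_eq_head_tail b 0
    have h3 : tailDeg a 0 = tailDeg b 0 := Finset.sum_congr rfl fun j hj =>
      happ j (Fin.ne_zero_of_lt (Finset.mem_Ioi.1 hj))
    have h4 : headDeg a 0 = headDeg b 0 := Finset.sum_congr rfl fun j hj =>
      absurd (Finset.mem_Iio.1 hj) (Fin.not_lt_zero j)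
    refine hab (Finsupp.ext fun i => ?_)
    by_cases hi : i = 0
    · rw [hi]; omega
    · exact happ i hi
  obtain ⟨q, hq, hneq⟩ := exists_first_diff hne
  have hq0 : q ≠ 0 := by
    rintro rfl
    simp at hneq
  have hlt : ∀ j, j ≠ 0 → j < q → a j = b j := fun j hj hjq => by
    simpa [hj] using hq j hjq
  rw [Finsupp.erase_ne hq0, Finsupp.erase_ne hq0] at hneq
  rcases lt_or_gt_of_ne hneq with h | h
  · exact Or.inr ⟨q, hq0, fun j hj hjq => (hlt j hj hjq).symm, h⟩
  · exact Or.inl ⟨q, hq0, hlt, h⟩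

/-- if `I = (L(u,v))` (with `u = x_1^{a_1}⋯x_n^{a_n}`, `a_1 > 0`,
`v = x_1^{b_1}⋯x_n^{b_n}`, `u ≥_lex v`, `deg u = deg v = d ≥ 2`) is a completely
lexsegment ideal with linear quotients, then every power `I^N`, `N ≥ 1`, has linear
quotients.  (Since `I` is generated in the single degree `d`, the minimal monomial
generating set of `I^N` is the set of products of `N` monomials of `L(u,v)`.) -/
theorem stmt5 {n : ℕ} (hn : 0 < n) (d : ℕ) (hd : 2 ≤ d) (u v : Mon n)
    (hud : mdeg u = d) (hvd : mdeg v = d)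
    (ha1 : 0 < u ⟨0, hn⟩)
    (huv : LexLE v u)
    (hcomp : IsCompletelyLex u v d)
    (hlq : HasLinQuot (LSeg u v d)) :
    ∀ N : ℕ, 1 ≤ N → HasLinQuot (prodSet (LSeg u v d) N) := by
  intro N _
  obtain ⟨m, rfl⟩ : ∃ m, n = m + 1 := ⟨n - 1, by omega⟩
  rw [lexLE_iff] at huv
  have hdeg : ∀ a ∈ prodSet (LSeg u v d) N, mdeg a = N * d := by
    intro a ha
    obtain ⟨s, rfl, hs, rfl⟩ := mem_prodSet_iff.1 ha
    exact mdeg_sum s fun x hx => (hs x hx).1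
  refine ⟨Prec, fun a _ ⟨q, _, _, h⟩ => lt_irrefl _ h, fun a _ b _ c _ => prec_trans,
    fun a ha b hb => prec_or_prec ((hdeg a ha).trans (hdeg b hb).symm), ?_⟩
  rintro uj huj ui hui ⟨q, hq, heq, hlt⟩
  obtain ⟨p, uk, hp, hswap, huk⟩ := exists_trade hud hvd huv hcomp hlq (mem_prodSet_iff.1 hui)
    (mem_prodSet_iff.1 huj) hq heq hlt
  have hpq : p ≠ q := by
    rcases hp with rfl | hp
    · exact hq.symm
    · exact hp.ne'
  have hukq : uk q = ui q + 1 := by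
    simpa [hpq] using swap_apply hswap q
  refine ⟨uk, mem_prodSet_iff.2 huk, ⟨q, hq, fun j hj hjq => ?_, by omega⟩, q, fun j hj => ?_,
    hukq, hlt⟩
  · have hpj : p ≠ j := by
      rcases hp with rfl | hp
      · exact hj.symm
      · exact (hjq.trans hp).ne'
    simpa [hpj, hjq.ne'] using swap_apply hswap j
  · have := swap_apply hswap j
    rw [if_neg hj.symm] at this
    omega
end
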